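/- Let R be a ring and let C• be a cochain complex of R-modules concentrated in degrees [0, d]. Let f ∈ End_{D(R)}(C•) be an endomorphism in the derived category which induces the zero map on all cohomology groups H^i(C•). Then f^{d+1} = 0 in End_{D(R)}(C•). -/

import Mathlib

open CategoryTheory

namespace DerivedCategory

open Limits Pretriangulated Triangulated

universe w v u

variable {A : Type u} [Category.{v} A] [Abelian A] [HasDerivedCategory.{w} A]

/-- A morphism between objects concentrated in a single degree `n` vanishes if it is zero
on cohomology in degree `n`. -/
lemma eq_zero_of_homologyFunctor_map_eq_zero {X Y : DerivedCategory A} (n : ℤ)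
    [X.IsGE n] [X.IsLE n] [Y.IsGE n] [Y.IsLE n] (f : X ⟶ Y)
    (hf : (homologyFunctor A n).map f = 0) : f = 0 := by
  obtain ⟨M, ⟨e⟩⟩ := exists_iso_singleFunctor_obj_of_isGE_of_isLE X n
  obtain ⟨N, ⟨e'⟩⟩ := exists_iso_singleFunctor_obj_of_isGE_of_isLE Y n
  obtain ⟨g, hg⟩ := (singleFunctor A n).map_surjective (e.inv ≫ f ≫ e'.hom)
  have hg₀ : g = 0 := by
    have h := NatIso.naturality_1 (singleFunctorCompHomologyFunctorIso A n) g
    dsimp only [Functor.comp_map, Functor.id_map] at h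
    rw [← h, hg]
    simp [hf]
  rw [← cancel_epi e.inv, ← cancel_mono e'.hom, Category.assoc, ← hg, hg₀]
  simp

/-- The left term of a truncation triangle inherits the lower bound of the middle term. -/
lemma isGE_obj₁_of_distTriang {X Y Z : DerivedCategory A} {f : X ⟶ Y} {g : Y ⟶ Z}
    {h : Z ⟶ X⟦(1 : ℤ)⟧} (hT : Triangle.mk f g h ∈ distTriang _) (n m : ℤ) (hnm : n ≤ m + 1)
    [Y.IsGE n] [Z.IsGE m] : X.IsGE n := by
  rw [isGE_iff]
  intro i hi
  exact (HomologySequence.exact₁ _ hT (i - 1) i).isZero_of_both_zeros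
    ((isZero_of_isGE Z m _ (by lia)).eq_of_src _ _)
    ((isZero_of_isGE Y n i hi).eq_of_tgt _ _)

/-- The right term of a truncation triangle inherits the upper bound of the middle term. -/
lemma isLE_obj₃_of_distTriang {X Y Z : DerivedCategory A} {f : X ⟶ Y} {g : Y ⟶ Z}
    {h : Z ⟶ X⟦(1 : ℤ)⟧} (hT : Triangle.mk f g h ∈ distTriang _) (n m : ℤ) (hmn : m ≤ n + 1)
    [Y.IsLE n] [X.IsLE m] : Z.IsLE n := by
  rw [isLE_iff]
  intro i hi
  exact (HomologySequence.exact₃ _ hT i (i + 1)).isZero_of_both_zeros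
    ((isZero_of_isLE Y n i hi).eq_of_src _ _)
    ((isZero_of_isLE X m _ (by lia)).eq_of_tgt _ _)

/-- An endomorphism which is zero on cohomology of an object whose cohomology is concentrated
in `n` consecutive degrees has vanishing `n`-th power. -/
theorem pow_eq_zero_of_homologyFunctor_map_eq_zero (n : ℕ) :
    ∀ (a b : ℤ) (_ : a + n = b + 1) (X : DerivedCategory A) [X.IsGE a] [X.IsLE b] (f : End X)
      (_ : ∀ i : ℤ, (homologyFunctor A i).map f = 0), f ^ n = 0 := by
  induction n with
  | zero =>
    intro a b hab X _ _ f _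
    exact (TStructure.t.isZero X b a (by lia)).eq_of_src _ _
  | succ n ih =>
    intro a b hab X _ _ f hf
    obtain ⟨Y, Z, hY, hZ, ι, π, δ, hT⟩ := TStructure.t.exists_triangle X a (a + 1) rfl
    have : Y.IsLE a := ⟨hY⟩
    have : Z.IsGE (a + 1) := ⟨hZ⟩
    have : Y.IsGE a := isGE_obj₁_of_distTriang hT a (a + 1) (by lia)
    have : Z.IsLE b := isLE_obj₃_of_distTriang hT b a (by lia)
    have hιfπ : ι ≫ f ≫ π = 0 := TStructure.t.zero _ a (a + 1)
    obtain ⟨f₁, hf₁⟩ : ∃ f₁ : Y ⟶ Y, ι ≫ f = f₁ ≫ ι :=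
      Triangle.coyoneda_exact₂ _ hT (ι ≫ f) ((Category.assoc _ _ _).trans hιfπ)
    have hι : ι ≫ f = 0 := by
      have : Mono ((homologyFunctor A a).map ι) :=
        (HomologySequence.mono_homologyMap_mor₁_iff _ hT (a - 1) a).2
          ((isZero_of_isGE Z (a + 1) _ (by lia)).eq_of_src _ _)
      have : f₁ = 0 := eq_zero_of_homologyFunctor_map_eq_zero a f₁ (by
        rw [← cancel_mono ((homologyFunctor A a).map ι), ← Functor.map_comp, ← hf₁,
          Functor.map_comp, hf, comp_zero, zero_comp])
      rw [hf₁, this, zero_comp]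
    obtain ⟨f₃, hf₃⟩ : ∃ f₃ : End Z, f ≫ π = π ≫ f₃ :=
      Triangle.yoneda_exact₂ _ hT (f ≫ π) hιfπ
    have hf₃_zero (i : ℤ) : (homologyFunctor A i).map f₃ = 0 := by
      by_cases hi : i < a + 1
      · exact (isZero_of_isGE Z (a + 1) i hi).eq_of_src _ _
      · have : Epi ((homologyFunctor A i).map π) :=
          (HomologySequence.epi_homologyMap_mor₂_iff _ hT i (i + 1)).2
            ((isZero_of_isLE Y a _ (by lia)).eq_of_tgt _ _)
        rw [← cancel_epi ((homologyFunctor A i).map π), ← Functor.map_comp, ← hf₃,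
          Functor.map_comp, hf, comp_zero, zero_comp]
    have hpow (k : ℕ) : (f ^ k : End X) ≫ π = π ≫ (f₃ ^ k : End Z) := by
      induction k with
      | zero => simp [End.one_def]
      | succ k hk =>
        rw [pow_succ, pow_succ, End.mul_def, End.mul_def, Category.assoc, hk,
          ← Category.assoc, hf₃, Category.assoc]
    have hpow_zero : (f ^ n : End X) ≫ π = 0 := by
      rw [hpow, ih (a + 1) b (by lia) Z f₃ hf₃_zero, comp_zero]
    obtain ⟨g, hg⟩ : ∃ g : X ⟶ Y, (f ^ n : End X) = g ≫ ι :=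
      Triangle.coyoneda_exact₂ _ hT (f ^ n : End X) hpow_zero
    rw [pow_succ', End.mul_def, hg, Category.assoc, hι, comp_zero]

end DerivedCategory

theorem statement_3 (R : Type) [CommRing R] [HasDerivedCategory (ModuleCat R)]
    (d : ℕ) (C : CochainComplex (ModuleCat R) ℤ)
    (hC : ∀ i : ℤ, (i < 0 ∨ (d : ℤ) < i) → Limits.IsZero (C.X i))
    (f : End (DerivedCategory.Q.obj C))
    (hf : ∀ i : ℤ, (DerivedCategory.homologyFunctor (ModuleCat R) i).map f = 0) :
    f ^ (d + 1) = 0 := by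
  have : C.IsStrictlyGE 0 := (C.isStrictlyGE_iff 0).2 fun i hi ↦ hC i (Or.inl hi)
  have : C.IsStrictlyLE d := (C.isStrictlyLE_iff d).2 fun i hi ↦ hC i (Or.inr hi)
  exact DerivedCategory.pow_eq_zero_of_homologyFunctor_map_eq_zero (d + 1) 0 d (by simp) _ f hf
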